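/- Let G be a finite (not necessarily connected) simple graph and h: V(G) → ℕ a function attaining only even values. Then there exist an edge-weighting ω: E(G) → {1,2,3} and a function f: V(G) → ℕ attaining only odd values such that (i) f(v) ≠ f(w) for every edge {v,w} ∈ E(G), and (ii) |s_ω(v) + h(v) − f(v)| = 1 for all v ∈ V(G). -/

import Mathlib

open Finset

/-- The weighted degree of `v`. -/
def wdeg {V : Type*} [Fintype V] [DecidableEq V] (G : SimpleGraph V) [DecidableRel G.Adj]
    (ω : V → V → ℕ) (v : V) : ℕ :=
  ∑ u ∈ G.neighborFinset v, ω v u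

/-! Fix a maximum cut of `G`, and orient the uncut edges acyclically. Suppose that an uncut edge
could contribute `2` at one end and a freely chosen `0` or `4` at the other. Then the weighted
degrees could be chosen greedily along the orientation, in steps of `4`, so that `f` is proper on
the uncut edges; across the cut, `f` is separated by its residue modulo `4`. The edge weight `1` or
`3` realises the average of the two contributions, and its deviation from them is a flow on the
uncut edges. By maximality of the cut, every vertex set is left by at least as many cut edges as
uncut edges, so by Hall's theorem the flow can be rerouted through the cut edges, where it is
absorbed by changing weights `2` to `1` or `3`. -/

section HallWithCapacities

theorem exists_mem_forall_card_fiber_eq {ι V : Type*} [Fintype ι] [Fintype V] [DecidableEq V]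
    (t : ι → Finset V) (m : V → ℕ) (hall : ∀ F : Finset ι, #F ≤ ∑ v ∈ F.biUnion t, m v)
    (hm : ∑ v, m v = Fintype.card ι) :
    ∃ g : ι → V, (∀ i, g i ∈ t i) ∧ ∀ v, #{i | g i = v} = m v := by
  classical
  let slots (i : ι) : Finset (Σ v, Fin (m v)) := (t i).sigma fun _ ↦ univ
  have hslots (F : Finset ι) : #F ≤ #(F.biUnion slots) := by
    have : F.biUnion slots = (F.biUnion t).sigma fun _ ↦ univ := by ext ⟨v, j⟩; simp [slots]
    simpa only [this, card_sigma, card_univ, Fintype.card_fin] using hall F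
  obtain ⟨g, g_inj, hg⟩ := (all_card_le_biUnion_card_iff_exists_injective slots).1 hslots
  have g_bij : g.Bijective :=
    (Fintype.bijective_iff_injective_and_card g).2 ⟨g_inj, by simp [hm]⟩
  refine ⟨fun i ↦ (g i).1, fun i ↦ (mem_sigma.1 (hg i)).1, fun v ↦ ?_⟩
  calc #{i | (g i).1 = v} = #{s : Σ v, Fin (m v) | s.1 = v} :=
        card_bijective g g_bij (by simp)
    _ = #(({v} : Finset V).sigma fun v ↦ (univ : Finset (Fin (m v)))) := by
        congr 1; ext s; simp
    _ = m v := by simp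

end HallWithCapacities

section Flow

variable {V : Type*} {H : SimpleGraph V}

/-- `y` is an integral flow on `H` in which each edge has capacity one: `y v u` is the signed amount
sent from `v` to `u`, so that `∑ u, y v u` is the net outflow at `v`. -/
structure IsUnitFlow (H : SimpleGraph V) (y : V → V → ℤ) : Prop where
  antisymm : ∀ v u, y v u = -y u v
  abs_le_one : ∀ v u, |y v u| ≤ 1
  eq_zero_of_not_adj : ∀ v u, ¬H.Adj v u → y v u = 0

theorem IsUnitFlow.sum_sum_self {y : V → V → ℤ} (hy : IsUnitFlow H y)
    (X : Finset V) : ∑ v ∈ X, ∑ u ∈ X, y v u = 0 := by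
  have : ∑ v ∈ X, ∑ u ∈ X, y v u = -∑ v ∈ X, ∑ u ∈ X, y v u := by
    conv_lhs => rw [sum_comm]
    simp_rw [← sum_neg_distrib]
    exact sum_congr rfl fun v _ ↦ sum_congr rfl fun u _ ↦ hy.antisymm u v
  lia

section

variable [DecidableEq V]

/-- The flow sending one unit along each dart in `P`; opposite darts cancel. -/
def dartFlow (P : Finset H.Dart) (v u : V) : ℤ :=
  #{d ∈ P | d.fst = v ∧ d.snd = u} - #{d ∈ P | d.fst = u ∧ d.snd = v}

theorem isUnitFlow_dartFlow (P : Finset H.Dart) : IsUnitFlow H (dartFlow P) where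
  antisymm v u := by simp only [dartFlow, neg_sub]
  abs_le_one v u := by
    have hle (v u : V) : #{d ∈ P | d.fst = v ∧ d.snd = u} ≤ 1 := by
      refine card_le_one.2 fun d hd e he ↦ SimpleGraph.Dart.ext _ _ (Prod.ext ?_ ?_) <;>
        simp_all
    have hvu := hle v u
    have huv := hle u v
    rw [dartFlow, abs_le]
    lia
  eq_zero_of_not_adj v u h := by
    have hempty (v u : V) (h : ¬H.Adj v u) : ({d ∈ P | d.fst = v ∧ d.snd = u} : Finset _) = ∅ := by
      refine filter_eq_empty_iff.2 ?_
      rintro d - ⟨rfl, rfl⟩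
      exact h d.adj
    simp [dartFlow, hempty v u h, hempty u v (mt H.adj_symm h)]

theorem sum_dartFlow [Fintype V] (P : Finset H.Dart) (v : V) :
    ∑ u, dartFlow P v u = #{d ∈ P | d.fst = v} - #{d ∈ P | d.snd = v} := by
  have hfst : #{d ∈ P | d.fst = v} = ∑ u, #{d ∈ P | d.fst = v ∧ d.snd = u} := by
    simp_rw [← filter_filter]
    exact card_eq_sum_card_fiberwise (by simp)
  have hsnd : #{d ∈ P | d.snd = v} = ∑ u, #{d ∈ P | d.fst = u ∧ d.snd = v} := by
    simp_rw [and_comm (b := _ = v), ← filter_filter]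
    exact card_eq_sum_card_fiberwise (by simp)
  simp only [dartFlow, sum_sub_distrib, hfst, hsnd]
  push_cast
  rfl

end

variable (H) in
theorem card_interedges_eq_sum [DecidableRel H.Adj] (S T : Finset V) :
    #(H.interedges S T) = ∑ v ∈ S, ∑ u ∈ T, if H.Adj v u then 1 else 0 := by
  rw [SimpleGraph.interedges_def, card_filter, sum_product]

variable [Fintype V] [DecidableEq V] [DecidableRel H.Adj]

variable (H) in
theorem sum_degree_eq_card_interedges (X : Finset V) :
    ∑ v ∈ X, H.degree v = #(H.interedges X X) + #(H.interedges X Xᶜ) := by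
  simp_rw [card_interedges_eq_sum, ← sum_add_distrib, sum_add_sum_compl,
    ← SimpleGraph.card_neighborFinset_eq_degree, SimpleGraph.neighborFinset_eq_filter, card_filter]

theorem IsUnitFlow.abs_sum_le_card_interedges {y : V → V → ℤ} (hy : IsUnitFlow H y) (X : Finset V) :
    |∑ v ∈ X, ∑ u, y v u| ≤ #(H.interedges X Xᶜ) := by
  have hle (v u : V) : |y v u| ≤ if H.Adj v u then 1 else 0 := by
    split_ifs with h
    · exact hy.abs_le_one v u
    · simp [hy.eq_zero_of_not_adj v u h]
  calc |∑ v ∈ X, ∑ u, y v u| = |∑ v ∈ X, ∑ u ∈ Xᶜ, y v u| := by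
        simp_rw [← sum_add_sum_compl X (y _), sum_add_distrib, hy.sum_sum_self, zero_add]
    _ ≤ ∑ v ∈ X, ∑ u ∈ Xᶜ, |y v u| :=
        (abs_sum_le_sum_abs _ _).trans (sum_le_sum fun v _ ↦ abs_sum_le_sum_abs _ _)
    _ ≤ ∑ v ∈ X, ∑ u ∈ Xᶜ, if H.Adj v u then 1 else 0 :=
        sum_le_sum fun v _ ↦ sum_le_sum fun u _ ↦ hle v u
    _ = #(H.interedges X Xᶜ) := by rw [card_interedges_eq_sum]; push_cast; rfl

theorem card_filter_dart_snd_eq_degree (v : V) : #{d : H.Dart | d.snd = v} = H.degree v := by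
  rw [← H.dart_fst_fiber_card_eq_degree]
  exact card_bijective _ SimpleGraph.Dart.symm_involutive.bijective (by simp)

/-- Hakimi's orientation theorem for the multigraph in which every edge of `H` is doubled. -/
theorem exists_dart_endpoint_card_eq (m : V → ℕ)
    (hX : ∀ X : Finset V, #(H.interedges X X) ≤ ∑ v ∈ X, m v)
    (hm : ∑ v, m v = ∑ v, H.degree v) :
    ∃ g : H.Dart → V, (∀ d, g d = d.fst ∨ g d = d.snd) ∧ ∀ v, #{d | g d = v} = m v := by
  let ends (d : H.Dart) : Finset V := {d.fst, d.snd}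
  have hends (F : Finset H.Dart) : #F ≤ #(H.interedges (F.biUnion ends) (F.biUnion ends)) := by
    refine card_le_card_of_injOn SimpleGraph.Dart.toProd (fun d hd ↦ ?_)
      SimpleGraph.Dart.toProd_injective.injOn
    simp only [mem_coe, SimpleGraph.mem_interedges_iff, mem_biUnion]
    exact ⟨⟨d, hd, by simp [ends]⟩, ⟨d, hd, by simp [ends]⟩, d.adj⟩
  obtain ⟨g, hg, hcard⟩ := exists_mem_forall_card_fiber_eq ends m
    (fun F ↦ (hends F).trans (hX _)) (hm.trans H.dart_card_eq_sum_degrees.symm)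
  exact ⟨g, fun d ↦ by simpa [ends] using hg d, hcard⟩

theorem sum_dartFlow_of_endpoint {g : H.Dart → V} (hg : ∀ d, g d = d.fst ∨ g d = d.snd) (v : V) :
    ∑ u, dartFlow {d | g d = d.fst} v u = #{d | g d = v} - H.degree v := by
  have hsource : #{d | g d = v} =
      #{d | g d = d.fst ∧ d.fst = v} + #{d | g d ≠ d.fst ∧ d.snd = v} := by
    rw [← card_filter_add_card_filter_not (fun d ↦ g d = d.fst), filter_filter, filter_filter]
    congr 2 <;> ext d <;> grind
  have htarget : H.degree v =
      #{d | g d = d.fst ∧ d.snd = v} + #{d | g d ≠ d.fst ∧ d.snd = v} := by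
    rw [← card_filter_dart_snd_eq_degree,
      ← card_filter_add_card_filter_not (fun d : H.Dart ↦ g d = d.fst),
      filter_filter, filter_filter]
    simp only [and_comm, ne_eq]
  rw [sum_dartFlow, filter_filter, filter_filter]
  lia

theorem exists_isUnitFlow_sum_eq (b : V → ℤ)
    (hb : ∀ X : Finset V, |∑ v ∈ X, b v| ≤ #(H.interedges X Xᶜ)) :
    ∃ y, IsUnitFlow H y ∧ ∀ v, ∑ u, y v u = b v := by
  have hsum : ∑ v, b v = 0 := by simpa [card_interedges_eq_sum] using hb univ
  have hnonneg (v : V) : 0 ≤ H.degree v + b v := by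
    have hv := (abs_le.1 (hb {v})).1
    have hdeg := sum_degree_eq_card_interedges H {v}
    simp only [sum_singleton] at hv hdeg
    lia
  choose m hm using fun v ↦ Int.eq_ofNat_of_zero_le (hnonneg v)
  have hX (X : Finset V) : #(H.interedges X X) ≤ ∑ v ∈ X, m v := by
    have hout := (abs_le.1 (hb X)).1
    have hdeg := sum_degree_eq_card_interedges H X
    zify at hdeg ⊢
    rw [← sum_congr rfl fun v _ ↦ hm v, sum_add_distrib]
    lia
  have htotal : ∑ v, m v = ∑ v, H.degree v := by
    zify
    rw [← sum_congr rfl fun v _ ↦ hm v, sum_add_distrib, hsum, add_zero]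
  obtain ⟨g, hg, hcard⟩ := exists_dart_endpoint_card_eq m hX htotal
  refine ⟨_, isUnitFlow_dartFlow {d | g d = d.fst}, fun v ↦ ?_⟩
  rw [sum_dartFlow_of_endpoint hg, hcard, ← hm]
  ring

end Flow

section MaxCut

variable {V : Type*} (G : SimpleGraph V) (s : V → Bool)

/-- The edges of `G` cut by the two-colouring `s`, that is, those with ends of different colours. -/
abbrev cutGraph : SimpleGraph V := G ⊓ (⊤ : SimpleGraph Bool).comap s

/-- The edges of `G` not cut by the two-colouring `s`, that is, those with ends of equal colours. -/
abbrev uncutGraph : SimpleGraph V := G \ (⊤ : SimpleGraph Bool).comap s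

/-- The two-colouring `s` is a maximum cut of `G`. Edges are counted by `Set.ncard`, so this is
only meaningful for finite `G`. -/
def IsMaxCut : Prop :=
  ∀ t : V → Bool, (cutGraph G t).edgeSet.ncard ≤ (cutGraph G s).edgeSet.ncard

theorem exists_isMaxCut [Finite V] : ∃ s, IsMaxCut G s :=
  Finite.exists_max fun s ↦ (cutGraph G s).edgeSet.ncard

section

variable [Fintype V] [DecidableEq V] [DecidableRel G.Adj]

theorem two_mul_ncard_edgeSet_eq_card_interedges (X : Finset V) :
    2 * G.edgeSet.ncard =
      #(G.interedges X X) + 2 * #(G.interedges X Xᶜ) + #(G.interedges Xᶜ Xᶜ) := by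
  have := G.symm
  have hcomm : #(G.interedges Xᶜ X) = #(G.interedges X Xᶜ) := Rel.card_interedges_comm _ _
  rw [← SimpleGraph.coe_edgeFinset, Set.ncard_coe_finset, ← G.sum_degrees_eq_twice_card_edges,
    ← sum_add_sum_compl X, sum_degree_eq_card_interedges, sum_degree_eq_card_interedges,
    compl_compl, hcomm]
  ring

variable {G s} in
theorem IsMaxCut.card_interedges_uncutGraph_le (hs : IsMaxCut G s) (X : Finset V) :
    #((uncutGraph G s).interedges X Xᶜ) ≤ #((cutGraph G s).interedges X Xᶜ) := by
  let flip (v : V) : Bool := s v ^^ decide (v ∈ X)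
  have hin : (cutGraph G flip).interedges X X = (cutGraph G s).interedges X X := by
    ext; simp +contextual [SimpleGraph.mem_interedges_iff, flip, Bool.eq_not]
  have hout : (cutGraph G flip).interedges Xᶜ Xᶜ = (cutGraph G s).interedges Xᶜ Xᶜ := by
    ext; simp +contextual [SimpleGraph.mem_interedges_iff, flip]
  have hcross : (cutGraph G flip).interedges X Xᶜ = (uncutGraph G s).interedges X Xᶜ := by
    ext; simp +contextual [SimpleGraph.mem_interedges_iff, flip, Bool.eq_not]
  have hflip := two_mul_ncard_edgeSet_eq_card_interedges (cutGraph G flip) X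
  rw [hin, hout, hcross] at hflip
  have hcut := two_mul_ncard_edgeSet_eq_card_interedges (cutGraph G s) X
  have hmax := hs flip
  lia

end

variable {G s} in
theorem IsUnitFlow.exists_symm_sum_eq [Fintype V] {z : V → V → ℤ}
    (hz : IsUnitFlow (uncutGraph G s) z) (hs : IsMaxCut G s) :
    ∃ c : V → V → ℤ, (∀ v u, c v u = c u v) ∧ (∀ v u, |c v u| ≤ 1) ∧
      (∀ v u, ¬(cutGraph G s).Adj v u → c v u = 0) ∧ ∀ v, ∑ u, c v u = ∑ u, z v u := by
  classical
  -- Reversing a flow on one side of the cut keeps it antisymmetric on uncut edges but makes it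
  -- symmetric on cut edges.
  let ε (v : V) : ℤ := if s v then 1 else -1
  have ε_sq (v : V) : ε v * ε v = 1 := by grind
  have abs_ε (v : V) : |ε v| = 1 := by grind
  have ε_eq {v u : V} (h : (uncutGraph G s).Adj v u) : ε v = ε u := by
    have : s v = s u := by simpa using h.2
    simp only [ε, this]
  have ε_ne {v u : V} (h : (cutGraph G s).Adj v u) : ε v = -ε u := by
    have : s v ≠ s u := h.2
    grind
  have hεz : IsUnitFlow (uncutGraph G s) fun v u ↦ ε v * z v u :=
    { antisymm := fun v u ↦ by
        by_cases h : (uncutGraph G s).Adj v u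
        · rw [ε_eq h, hz.antisymm v u, mul_neg]
        · rw [hz.eq_zero_of_not_adj v u h, hz.eq_zero_of_not_adj u v (mt SimpleGraph.Adj.symm h)]
          simp
      abs_le_one := fun v u ↦ by simpa [abs_mul, abs_ε] using hz.abs_le_one v u
      eq_zero_of_not_adj := fun v u h ↦ by rw [hz.eq_zero_of_not_adj v u h, mul_zero] }
  obtain ⟨y, hy, hsum⟩ := exists_isUnitFlow_sum_eq (H := cutGraph G s) _ fun X ↦
    (hεz.abs_sum_le_card_interedges X).trans (mod_cast hs.card_interedges_uncutGraph_le X)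
  refine ⟨fun v u ↦ ε v * y v u, fun v u ↦ ?_, fun v u ↦ ?_, fun v u h ↦ ?_, fun v ↦ ?_⟩ <;>
    beta_reduce
  · by_cases h : (cutGraph G s).Adj v u
    · rw [ε_ne h, hy.antisymm v u, neg_mul_neg]
    · rw [hy.eq_zero_of_not_adj v u h, hy.eq_zero_of_not_adj u v (mt SimpleGraph.Adj.symm h)]
      simp
  · simpa [abs_mul, abs_ε] using hy.abs_le_one v u
  · rw [hy.eq_zero_of_not_adj v u h, mul_zero]
  · rw [← mul_sum, hsum, ← mul_sum, ← mul_assoc, ε_sq, one_mul]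

end MaxCut

section Orientation

theorem exists_wellFounded_mem_adj_iff {V : Type*} (H : SimpleGraph V) [H.LocallyFinite] :
    ∃ N : V → Finset V, (WellFounded fun u v ↦ u ∈ N v) ∧
      ∀ v u, H.Adj v u ↔ u ∈ N v ∨ v ∈ N u := by
  classical
  refine ⟨fun v ↦ {u ∈ H.neighborFinset v | WellOrderingRel u v}, ?_, fun v u ↦ ?_⟩
  · refine Subrelation.wf (r := WellOrderingRel) (fun h ↦ (mem_filter.1 h).2) ?_
    exact WellOrderingRel.isWellOrder.wf
  · simp only [mem_filter, SimpleGraph.mem_neighborFinset, H.adj_comm u v, ← and_or_left]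
    refine ⟨fun h ↦ ⟨h, ?_⟩, And.left⟩
    have := trichotomous_of WellOrderingRel u v
    grind [h.ne]

theorem exists_greedy_choice {V α : Type*} {N : V → Finset V}
    (hN : WellFounded fun u v ↦ u ∈ N v) (c : V → ℕ → α) (hc : ∀ v, (c v).Injective) :
    ∃ k : V → ℕ, ∀ v, k v ≤ #(N v) ∧ ∀ u ∈ N v, c v (k v) ≠ c u (k u) := by
  classical
  have hstep (v : V) (k : ∀ u, u ∈ N v → ℕ) :
      ∃ j ≤ #(N v), ∀ u (hu : u ∈ N v), c v j ≠ c u (k u hu) := by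
    have hcard : #((N v).attach.image fun u ↦ c u.1 (k u.1 u.2)) <
        #((range (#(N v) + 1)).image (c v)) := by
      rw [card_image_of_injective _ (hc v), card_range, Nat.lt_succ_iff]
      exact card_image_le.trans_eq card_attach
    obtain ⟨x, hx, hfree⟩ := exists_mem_notMem_of_card_lt_card hcard
    obtain ⟨j, hj, rfl⟩ := mem_image.1 hx
    exact ⟨j, mem_range_succ_iff.1 hj, fun u hu h ↦
      hfree (mem_image.2 ⟨⟨u, hu⟩, mem_attach _ _, h.symm⟩)⟩
  choose F hF hFne using hstep
  refine ⟨hN.fix (C := fun _ ↦ ℕ) F, fun v ↦ ?_⟩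
  rw [hN.fix_eq]
  exact ⟨hF _ _, hFne _ _⟩

end Orientation

section Weighting

variable {V : Type*} [Fintype V] [DecidableEq V] {G : SimpleGraph V} [DecidableRel G.Adj]
  {s : V → Bool}

theorem wdeg_pos {ω : V → V → ℕ} {v u : V} (hvu : G.Adj v u) (hω : 0 < ω v u) :
    0 < wdeg G ω v :=
  sum_pos' (fun _ _ ↦ Nat.zero_le _) ⟨u, by simpa using hvu, hω⟩

theorem exists_weighting_wdeg_eq_add_sum {δ : V → V → ℤ} (δ_symm : ∀ v u, δ v u = δ u v)
    (abs_δ : ∀ v u, |δ v u| ≤ 1) (δ_adj : ∀ v u, ¬G.Adj v u → δ v u = 0) :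
    ∃ ω : V → V → ℕ, (∀ v u, ω v u = ω u v) ∧ (∀ v u, ω v u ∈ ({1, 2, 3} : Set ℕ)) ∧
      ∀ v, (wdeg G ω v : ℤ) = 2 * G.degree v + ∑ u, δ v u := by
  choose ω hω using fun v u ↦ Int.eq_ofNat_of_zero_le
    (show 0 ≤ 2 + δ v u by linarith [abs_le.1 (abs_δ v u)])
  refine ⟨ω, fun v u ↦ ?_, fun v u ↦ ?_, fun v ↦ ?_⟩
  · have := hω v u
    have := hω u v
    have := δ_symm v u
    lia
  · have := hω v u
    have := abs_le.1 (abs_δ v u)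
    have : ω v u = 1 ∨ ω v u = 2 ∨ ω v u = 3 := by lia
    simpa using this
  · have sum_δ : ∑ u ∈ G.neighborFinset v, δ v u = ∑ u, δ v u :=
      sum_subset (subset_univ _) fun u _ hu ↦ δ_adj v u (by simpa using hu)
    rw [wdeg, Nat.cast_sum, ← sum_congr rfl fun u _ ↦ hω v u, sum_add_distrib, sum_δ]
    simp [mul_comm]

theorem IsMaxCut.exists_weighting_wdeg_eq (hs : IsMaxCut G s)
    {a : V → V → ℤ} (ha : ∀ v u, |a v u| + |a u v| ≤ 1)
    (ha_uncut : ∀ v u, ¬(uncutGraph G s).Adj v u → a v u = 0) :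
    ∃ ω : V → V → ℕ, (∀ v u, ω v u = ω u v) ∧ (∀ v u, ω v u ∈ ({1, 2, 3} : Set ℕ)) ∧
      ∀ v, (wdeg G ω v : ℤ) = 2 * G.degree v + 2 * ∑ u, a v u := by
  have hz : IsUnitFlow (uncutGraph G s) fun v u ↦ a v u - a u v :=
    { antisymm := fun v u ↦ by ring
      abs_le_one := fun v u ↦ (abs_sub _ _).trans (ha v u)
      eq_zero_of_not_adj := fun v u h ↦ by
        rw [ha_uncut v u h, ha_uncut u v (mt SimpleGraph.Adj.symm h), sub_zero] }
  obtain ⟨c, c_symm, abs_c, c_cut, sum_c⟩ := hz.exists_symm_sum_eq hs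
  -- On uncut edges the symmetric part of `2 * a`; its antisymmetric part is rerouted into `c`.
  let δ (v u : V) : ℤ := c v u + a v u + a u v
  have δ_symm (v u : V) : δ v u = δ u v := by grind
  have abs_δ (v u : V) : |δ v u| ≤ 1 := by
    by_cases h : (uncutGraph G s).Adj v u
    · have hcut : ¬(cutGraph G s).Adj v u := fun hcut ↦ h.2 hcut.2
      grind
    · have := ha_uncut u v (mt SimpleGraph.Adj.symm h)
      grind
  have δ_adj (v u : V) (h : ¬G.Adj v u) : δ v u = 0 := by
    have := c_cut v u fun hcut ↦ h hcut.1
    have := ha_uncut v u fun huncut ↦ h huncut.1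
    have := ha_uncut u v fun huncut ↦ h huncut.1.symm
    grind
  obtain ⟨ω, ω_symm, ω_mem, wdeg_ω⟩ := exists_weighting_wdeg_eq_add_sum δ_symm abs_δ δ_adj
  refine ⟨ω, ω_symm, ω_mem, fun v ↦ ?_⟩
  simp only [wdeg_ω, δ, sum_add_distrib, sum_c, sum_sub_distrib]
  ring

theorem IsMaxCut.exists_weighting_wdeg_add_eq (hs : IsMaxCut G s)
    {N B : V → Finset V} (hN : ∀ v, ∀ u ∈ N v, (uncutGraph G s).Adj v u ∧ v ∉ N u)
    (hB : ∀ v, B v ⊆ N v) :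
    ∃ ω : V → V → ℕ, (∀ v u, ω v u = ω u v) ∧ (∀ v u, ω v u ∈ ({1, 2, 3} : Set ℕ)) ∧
      ∀ v, wdeg G ω v + 2 * #(N v) = 2 * G.degree v + 4 * #(B v) := by
  let a (v u : V) : ℤ := 2 * (if u ∈ B v then 1 else 0) - if u ∈ N v then 1 else 0
  obtain ⟨ω, ω_symm, ω_mem, wdeg_ω⟩ := hs.exists_weighting_wdeg_eq (a := a)
    (fun v u ↦ by grind) (fun v u h ↦ by grind)
  refine ⟨ω, ω_symm, ω_mem, fun v ↦ ?_⟩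
  have sum_a : ∑ u, a v u = 2 * #(B v) - #(N v) := by simp [a, mul_comm]
  have := wdeg_ω v
  lia

theorem IsMaxCut.exists_weighting_even_wdeg_ne {α : Type*} (hs : IsMaxCut G s) (c : V → ℕ → α)
    (hc : ∀ v d, (fun k ↦ c v (d + 4 * k)).Injective) :
    ∃ ω : V → V → ℕ, (∀ v u, ω v u = ω u v) ∧ (∀ v u, ω v u ∈ ({1, 2, 3} : Set ℕ)) ∧
      (∀ v, Even (wdeg G ω v)) ∧
      ∀ v u, (uncutGraph G s).Adj v u → c v (wdeg G ω v) ≠ c u (wdeg G ω u) := by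
  obtain ⟨N, N_wf, hN⟩ := exists_wellFounded_mem_adj_iff (uncutGraph G s)
  have hN_uncut (v : V) : ∀ u ∈ N v, (uncutGraph G s).Adj v u ∧ v ∉ N u := fun u hu ↦
    ⟨(hN v u).2 (.inl hu), N_wf.asymmetric _ _ hu⟩
  have card_N (v : V) : #(N v) ≤ G.degree v := card_le_card fun u hu ↦ by
    simpa using (hN_uncut v u hu).1.1
  obtain ⟨k, hk⟩ := exists_greedy_choice N_wf _ fun v ↦ hc v (2 * (G.degree v - #(N v)))
  choose B hB card_B using fun v ↦ exists_subset_card_eq (hk v).1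
  obtain ⟨ω, ω_symm, ω_mem, wdeg_ω⟩ := hs.exists_weighting_wdeg_add_eq hN_uncut hB
  have hwdeg (v : V) : wdeg G ω v = 2 * (G.degree v - #(N v)) + 4 * k v := by
    have := wdeg_ω v
    have := card_N v
    have := card_B v
    lia
  refine ⟨ω, ω_symm, ω_mem, fun v ↦ by grind, fun v u hvu ↦ ?_⟩
  simp only [hwdeg]
  rcases (hN v u).1 hvu with hu | hv
  · exact (hk v).2 u hu
  · exact ((hk u).2 v hv).symm

end Weighting

section OddNear

/-- For even `e`, an odd number at distance one from `e` which is congruent to `1` or to `3`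
modulo `4` as `b` is true or false; the latter is impossible for `e = 0`, where the value is `1`. -/
def oddNear (b : Bool) (e : ℕ) : ℕ :=
  if b then 4 * (e / 4) + 1 else max 1 (4 * ((e + 2) / 4) - 1)

theorem odd_oddNear (b : Bool) (e : ℕ) : Odd (oddNear b e) := by
  rw [Nat.odd_iff]
  grind [oddNear]

theorem abs_sub_oddNear {e : ℕ} (he : Even e) (b : Bool) : |(e : ℤ) - oddNear b e| = 1 := by
  rw [Nat.even_iff] at he
  grind [oddNear]

theorem oddNear_ne_oddNear {b b' : Bool} (hb : b ≠ b') {e e' : ℕ} (he : 2 ≤ e)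
    (he' : 2 ≤ e') : oddNear b e ≠ oddNear b' e' := by
  grind [oddNear]

theorem oddNear_add_four_mul_injective (b : Bool) (e : ℕ) :
    (fun k ↦ oddNear b (e + 4 * k)).Injective := by
  intro k l h
  grind [oddNear]

end OddNear

/-- for every graph `G` and every even-valued `h : V → ℕ` there are an
edge-weighting `ω : E → {1,2,3}` and an odd-valued proper coloring `f` with
`|s_ω(v) + h(v) − f(v)| = 1` for all `v`. -/
theorem stmt2 {V : Type*} [Fintype V] [DecidableEq V] (G : SimpleGraph V) [DecidableRel G.Adj]
    (h : V → ℕ) (hh : ∀ v, Even (h v)) :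
    ∃ (ω : V → V → ℕ) (f : V → ℕ),
      (∀ a b, ω a b = ω b a) ∧
      (∀ a b, G.Adj a b → ω a b ∈ ({1, 2, 3} : Set ℕ)) ∧
      (∀ v, Odd (f v)) ∧
      (∀ v w, G.Adj v w → f v ≠ f w) ∧
      (∀ v, |(wdeg G ω v : ℤ) + (h v : ℤ) - (f v : ℤ)| = 1) := by
  obtain ⟨s, hs⟩ := exists_isMaxCut G
  obtain ⟨ω, ω_symm, ω_mem, even_wdeg, hne⟩ :=
    hs.exists_weighting_even_wdeg_ne (fun v d ↦ oddNear (s v) (h v + d)) fun v d ↦ by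
      simpa only [add_assoc] using oddNear_add_four_mul_injective (s v) (h v + d)
  have heven (v : V) : Even (h v + wdeg G ω v) := (hh v).add (even_wdeg v)
  have two_le {v u : V} (hvu : G.Adj v u) : 2 ≤ h v + wdeg G ω v := by
    have := wdeg_pos hvu (by grind : 0 < ω v u)
    have := heven v
    grind
  refine ⟨ω, fun v ↦ oddNear (s v) (h v + wdeg G ω v), ω_symm, fun v u _ ↦ ω_mem v u,
    fun v ↦ odd_oddNear _ _, fun v u hvu ↦ ?_, fun v ↦ ?_⟩
  · by_cases hsvu : s v = s u
    · exact hne v u ⟨hvu, by simpa using hsvu⟩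
    · exact oddNear_ne_oddNear hsvu (two_le hvu) (two_le hvu.symm)
  · simpa [add_comm] using abs_sub_oddNear (heven v) (s v)
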